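/- arXiv:1311.4859 — 2 statements merged into one kernel-verified Lean document; each statement's English description precedes it below -/
import Mathlib

section
/- For every integer k ≥ 7, the ring of k roofs R_k is nucleation-free: every induced subgraph of R_k on n ≥ 5 vertices satisfies rk₃ < 3n − 6, i.e., it is not rigid in ℝ³. -/
/-!
The bound already follows by counting edges: the rank of a framework is at most its number of
edges, and every set of `n ≥ 5` vertices of the ring spans at most `3n - 7` edges.

For the count, let `x i ≤ 2` be the number of chosen vertices on the hinge `i` and `y i ≤ 1` the
number of chosen apices of the roof `i`. The edges of the roof `i` number
`x (i-1) * x i + y i * (x (i-1) + x i)`, so `3n - e` is the sum over the ring of the local terms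
`roofTerm (x (i-1)) (x i) (y i)`, all of which are nonnegative.

* If every hinge is met, each local term is at least `1`, and there are `k ≥ 7` of them.
* Otherwise the ring is cut open at a hinge with `x = 0` and traversed from there. With `N` the
  number of vertices and `Q` the sum of the local terms seen so far, and `v` the value of `x` at the
  current hinge, the alternative `7 ≤ Q` or (`2 * N ≤ Q` and `3 * v ≤ Q`) is preserved by each step
  (`roofTerm_step`). After the full traversal `N = n ≥ 5`, which forces `7 ≤ Q`.
-/

open SimpleGraph

variable {V : Type*}

/-- The rigidity row of an (ordered) pair of vertices at a framework `p`. -/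
def rigidityRow [DecidableEq V] (p : V → Fin 3 → ℝ) (i j : V) : V → Fin 3 → ℝ :=
  fun k => if k = i then p i - p j else if k = j then p j - p i else 0

/-- The rank of the rigidity rows of `G` at `p`. -/
noncomputable def rankAt [DecidableEq V] (G : SimpleGraph V) (p : V → Fin 3 → ℝ) : ℕ :=
  Module.finrank ℝ (Submodule.span ℝ
    {w : V → Fin 3 → ℝ | ∃ i j, G.Adj i j ∧ w = rigidityRow p i j})

/-- generic 3-dimensional rank of a graph. -/
noncomputable def genRank [DecidableEq V] (G : SimpleGraph V) : ℕ :=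
  sSup {n : ℕ | ∃ p : V → Fin 3 → ℝ, n = rankAt G p}

noncomputable def numEdges (G : SimpleGraph V) : ℕ := G.edgeSet.ncard

def IsIndependent [DecidableEq V] (G : SimpleGraph V) : Prop := genRank G = numEdges G

def NucleationFree [DecidableEq V] (G : SimpleGraph V) : Prop :=
  ∀ S : Finset V, 5 ≤ S.card → genRank (G.induce (S : Set V)) ≠ 3 * S.card - 6

def addEdge (G : SimpleGraph V) (x y : V) : SimpleGraph V :=
  G ⊔ SimpleGraph.fromEdgeSet {s(x, y)}

def IsImpliedNonEdge [DecidableEq V] (G : SimpleGraph V) (x y : V) : Prop :=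
  x ≠ y ∧ ¬ G.Adj x y ∧ genRank (addEdge G x y) = genRank G

/-- The ring of `k` roofs: vertex `(i,0)` is the hinge vertex `aᵢ`, `(i,1)` is `bᵢ`,
and `(i,2)` is the apex `cᵢ` of the roof `Bᵢ` spanning the hinges `{aᵢ₋₁,bᵢ₋₁}` and
`{aᵢ,bᵢ}`. -/
def ringOfRoofs (k : ℕ) : SimpleGraph (ZMod k × Fin 3) :=
  SimpleGraph.fromRel (fun x y =>
    (y.1 = x.1 + 1 ∧ x.2 ≠ 2 ∧ y.2 ≠ 2) ∨
    (x.2 = 2 ∧ y.2 ≠ 2 ∧ (y.1 = x.1 ∨ y.1 + 1 = x.1)))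

/-- The contribution of a roof to `3n - e`: here `u`, `v` count the chosen vertices on its first and
second hinge and `y` the chosen apices; the vertices of the first hinge are accounted for by the
preceding roof. -/
def roofTerm (u v y : ℤ) : ℤ := 3 * (v + y) - (u * v + y * u + y * v)

/-- The invariant of the traversal: `u`, `Q`, `N` are the hinge count, the partial sum of local terms
and the partial vertex count before passing a roof. -/
lemma roofTerm_step {u v y Q N : ℤ} (hu : 0 ≤ u) (hu' : u ≤ 2) (hv : 0 ≤ v) (hv' : v ≤ 2)
    (hy : 0 ≤ y) (hy' : y ≤ 1) (h : 7 ≤ Q ∨ (2 * N ≤ Q ∧ 3 * u ≤ Q)) :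
    7 ≤ Q + roofTerm u v y ∨
      (2 * (N + (v + y)) ≤ Q + roofTerm u v y ∧ 3 * v ≤ Q + roofTerm u v y) := by
  unfold roofTerm
  interval_cases u <;> interval_cases v <;> interval_cases y <;> omega

lemma one_le_roofTerm {u v y : ℤ} (hu : 0 ≤ u) (hu' : u ≤ 2) (hv : 1 ≤ v) (hv' : v ≤ 2)
    (hy : 0 ≤ y) (hy' : y ≤ 1) : 1 ≤ roofTerm u v y := by
  unfold roofTerm
  interval_cases u <;> interval_cases v <;> interval_cases y <;> omega

/-- Summing over `ZMod k` amounts to walking once around the ring, from any starting point. -/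
lemma sum_zmod_eq_sum_range {k : ℕ} [NeZero k] (f : ZMod k → ℤ) (j : ZMod k) :
    ∑ i, f i = ∑ m ∈ Finset.range k, f (j + (m : ZMod k) + 1) := by
  obtain ⟨n, rfl⟩ : ∃ n, k = n + 1 := ⟨k - 1, by have := NeZero.pos k; omega⟩
  rw [← Equiv.sum_comp (Equiv.addLeft (j + 1)) f, ← Fin.sum_univ_eq_sum_range]
  refine Finset.sum_congr rfl fun i _ => ?_
  change f (j + 1 + i) = f (j + ((ZMod.val (n := n + 1) i : ℕ) : ZMod (n + 1)) + 1)
  rw [ZMod.natCast_zmod_val, add_right_comm]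

/-- The purely arithmetic form of the edge count: at least `5` chosen vertices give `3n - e ≥ 7`. -/
lemma seven_le_sum_roofTerm {k : ℕ} [NeZero k] (hk : 7 ≤ k) (x y : ZMod k → ℤ)
    (hx : ∀ i, 0 ≤ x i) (hx' : ∀ i, x i ≤ 2) (hy : ∀ i, 0 ≤ y i) (hy' : ∀ i, y i ≤ 1)
    (hN : 5 ≤ ∑ i, (x i + y i)) : 7 ≤ ∑ i, roofTerm (x (i - 1)) (x i) (y i) := by
  by_cases h0 : ∃ j, x j = 0
  · obtain ⟨j, hj⟩ := h0
    have key : ∀ m : ℕ,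
        7 ≤ ∑ t ∈ Finset.range m, roofTerm (x (j + (t : ZMod k) + 1 - 1)) (x (j + (t : ZMod k) + 1))
            (y (j + (t : ZMod k) + 1)) ∨
        (2 * ∑ t ∈ Finset.range m, (x (j + (t : ZMod k) + 1) + y (j + (t : ZMod k) + 1)) ≤
          ∑ t ∈ Finset.range m, roofTerm (x (j + (t : ZMod k) + 1 - 1)) (x (j + (t : ZMod k) + 1))
            (y (j + (t : ZMod k) + 1)) ∧
        3 * x (j + (m : ZMod k)) ≤
          ∑ t ∈ Finset.range m, roofTerm (x (j + (t : ZMod k) + 1 - 1)) (x (j + (t : ZMod k) + 1))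
            (y (j + (t : ZMod k) + 1))) := by
      intro m
      induction m with
      | zero => right; simp [hj]
      | succ m ih =>
        rw [Finset.sum_range_succ, Finset.sum_range_succ]
        have e : j + ((m + 1 : ℕ) : ZMod k) = j + (m : ZMod k) + 1 := by push_cast; ring
        rw [e, add_sub_cancel_right]
        exact roofTerm_step (hx _) (hx' _) (hx _) (hx' _) (hy _) (hy' _) ih
    have := key k
    rw [← sum_zmod_eq_sum_range (fun i => roofTerm (x (i - 1)) (x i) (y i)) j,
      ← sum_zmod_eq_sum_range (fun i => x i + y i) j] at this
    omega
  · push Not at h0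
    have h1 : ∑ _i : ZMod k, (1 : ℤ) ≤ ∑ i, roofTerm (x (i - 1)) (x i) (y i) :=
      Finset.sum_le_sum fun i _ => one_le_roofTerm (hx _) (hx' _)
        (by have := hx i; have := h0 i; omega) (hx' _) (hy _) (hy' _)
    simp [ZMod.card] at h1
    omega

lemma rigidityRow_comm {W : Type*} [DecidableEq W] (p : W → Fin 3 → ℝ) (i j : W) :
    rigidityRow p i j = rigidityRow p j i := by
  funext l
  unfold rigidityRow
  split_ifs <;> simp_all

/-- The generic rank is at most the size of any finite set of ordered pairs that contains each edge
in at least one of its two directions. -/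
lemma genRank_le_card {W : Type*} [DecidableEq W] (G : SimpleGraph W) (E : Finset (W × W))
    (hE : ∀ i j, G.Adj i j → (i, j) ∈ E ∨ (j, i) ∈ E) : genRank G ≤ E.card := by
  classical
  refine csSup_le ⟨_, 0, rfl⟩ ?_
  rintro _ ⟨p, rfl⟩
  have hsub : {w : W → Fin 3 → ℝ | ∃ i j, G.Adj i j ∧ w = rigidityRow p i j} ⊆
      ((E.image fun q => rigidityRow p q.1 q.2 : Finset (W → Fin 3 → ℝ)) :
        Set (W → Fin 3 → ℝ)) := by
    rintro w ⟨i, j, hij, rfl⟩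
    rw [Finset.mem_coe, Finset.mem_image]
    rcases hE i j hij with h | h
    · exact ⟨_, h, rfl⟩
    · exact ⟨_, h, rigidityRow_comm p j i⟩
  -- `W` may be infinite, so the ambient span is used to supply finite dimensionality.
  have hfin := FiniteDimensional.span_finset ℝ (E.image fun q => rigidityRow p q.1 q.2)
  exact (Submodule.finrank_mono (Submodule.span_mono hsub)).trans
    ((finrank_span_finset_le_card _).trans Finset.card_image_le)

/-- The chosen vertices on the hinge `i`. -/
def hingePart {k : ℕ} (S : Finset (ZMod k × Fin 3)) (i : ZMod k) :
    Finset ↥(S : Set (ZMod k × Fin 3)) :=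
  Finset.univ.filter fun v => v.1.1 = i ∧ v.1.2 ≠ 2

/-- The apex of the roof `i`, if it is chosen. -/
def apexPart {k : ℕ} (S : Finset (ZMod k × Fin 3)) (i : ZMod k) :
    Finset ↥(S : Set (ZMod k × Fin 3)) :=
  Finset.univ.filter fun v => v.1.1 = i ∧ v.1.2 = 2

lemma card_hingePart_le {k : ℕ} (S : Finset (ZMod k × Fin 3)) (i : ZMod k) :
    (hingePart S i).card ≤ 2 := by
  have : (hingePart S i).card ≤ ({0, 1} : Finset (Fin 3)).card := by
    refine Finset.card_le_card_of_injOn (fun v => v.1.2) ?_ ?_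
    · intro v hv
      simp only [hingePart, Finset.coe_filter, Set.mem_ofPred_eq] at hv
      have h2 : ∀ s : Fin 3, s ≠ 2 → s ∈ ({0, 1} : Finset (Fin 3)) := by decide
      exact h2 _ hv.2.2
    · intro v hv w hw h
      simp only [hingePart, Finset.coe_filter, Set.mem_ofPred_eq] at hv hw
      exact Subtype.ext (Prod.ext (hv.2.1.trans hw.2.1.symm) h)
  simpa using this

lemma card_apexPart_le {k : ℕ} (S : Finset (ZMod k × Fin 3)) (i : ZMod k) :
    (apexPart S i).card ≤ 1 := by
  refine Finset.card_le_one.2 fun v hv w hw => ?_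
  simp only [apexPart, Finset.mem_filter] at hv hw
  exact Subtype.ext (Prod.ext (hv.2.1.trans hw.2.1.symm) (hv.2.2.trans hw.2.2.symm))

lemma card_eq_sum_parts {k : ℕ} [NeZero k] (S : Finset (ZMod k × Fin 3)) :
    S.card = ∑ i, ((hingePart S i).card + (apexPart S i).card) := by
  have h1 : S.card = (Finset.univ : Finset ↥(S : Set (ZMod k × Fin 3))).card := by
    simp
  rw [h1, Finset.card_eq_sum_card_fiberwise (f := fun v => v.1.1) (t := Finset.univ)
    (fun _ _ => Finset.mem_coe.2 (Finset.mem_univ _))]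
  refine Finset.sum_congr rfl fun i _ => ?_
  rw [add_comm, ← Finset.card_filter_add_card_filter_not (fun v => v.1.2 = 2),
    Finset.filter_filter, Finset.filter_filter]
  rfl

/-- The edges of the roof `i` with both ends chosen, each in one direction. -/
def roofEdges {k : ℕ} (S : Finset (ZMod k × Fin 3)) (i : ZMod k) :
    Finset (↥(S : Set (ZMod k × Fin 3)) × ↥(S : Set (ZMod k × Fin 3))) :=
  hingePart S (i - 1) ×ˢ hingePart S i ∪ apexPart S i ×ˢ hingePart S (i - 1) ∪
    apexPart S i ×ˢ hingePart S i

lemma card_roofEdges_le {k : ℕ} (S : Finset (ZMod k × Fin 3)) (i : ZMod k) :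
    (roofEdges S i).card ≤ (hingePart S (i - 1)).card * (hingePart S i).card +
      (apexPart S i).card * (hingePart S (i - 1)).card +
      (apexPart S i).card * (hingePart S i).card := by
  unfold roofEdges
  refine (Finset.card_union_le _ _).trans ?_
  refine add_le_add ((Finset.card_union_le _ _).trans ?_) ?_ <;> simp [Finset.card_product]

lemma mem_roofEdges_of_adj {k : ℕ} [NeZero k] (S : Finset (ZMod k × Fin 3))
    (v w : ↥(S : Set (ZMod k × Fin 3)))
    (h : ((ringOfRoofs k).induce (S : Set (ZMod k × Fin 3))).Adj v w) :
    (v, w) ∈ Finset.univ.biUnion (roofEdges S) ∨ (w, v) ∈ Finset.univ.biUnion (roofEdges S) := by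
  have aux : ∀ v w : ↥(S : Set (ZMod k × Fin 3)),
      ((w.1.1 = v.1.1 + 1 ∧ v.1.2 ≠ 2 ∧ w.1.2 ≠ 2) ∨
        (v.1.2 = 2 ∧ w.1.2 ≠ 2 ∧ (w.1.1 = v.1.1 ∨ w.1.1 + 1 = v.1.1))) →
      (v, w) ∈ Finset.univ.biUnion (roofEdges S) := by
    intro v w h
    simp only [Finset.mem_biUnion, Finset.mem_univ, true_and, roofEdges, Finset.mem_union,
      Finset.mem_product, hingePart, apexPart, Finset.mem_filter]
    rcases h with ⟨h1, h2, h3⟩ | ⟨h1, h2, h3 | h3⟩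
    · exact ⟨w.1.1, Or.inl (Or.inl ⟨⟨by rw [h1]; ring, h2⟩, rfl, h3⟩)⟩
    · exact ⟨v.1.1, Or.inr ⟨⟨rfl, h1⟩, h3, h2⟩⟩
    · exact ⟨v.1.1, Or.inl (Or.inr ⟨⟨rfl, h1⟩, by rw [← h3]; ring, h2⟩)⟩
  rw [SimpleGraph.induce_adj, ringOfRoofs, SimpleGraph.fromRel_adj] at h
  exact h.2.imp (aux v w) (aux w v)

/-- For `k ≥ 7` the ring of roofs is nucleation-free: every induced subgraph on
`n ≥ 5` vertices has generic 3-dimensional rank strictly less than `3n - 6`,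
i.e. it is not rigid in ℝ³. -/
theorem ringOfRoofs_nucleationFree (k : ℕ) (hk : 7 ≤ k)
    (S : Finset (ZMod k × Fin 3)) (hS : 5 ≤ S.card) :
    genRank ((ringOfRoofs k).induce (S : Set (ZMod k × Fin 3))) < 3 * S.card - 6 := by
  have : NeZero k := ⟨by omega⟩
  have hrank := genRank_le_card _ _ (mem_roofEdges_of_adj S)
  have hE : (Finset.univ.biUnion (roofEdges S)).card ≤ _ :=
    Finset.card_biUnion_le.trans (Finset.sum_le_sum fun i _ => card_roofEdges_le S i)
  have hcard := card_eq_sum_parts S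
  have hmain := seven_le_sum_roofTerm hk (fun i => ((hingePart S i).card : ℤ))
    (fun i => ((apexPart S i).card : ℤ)) (fun i => by positivity)
    (fun i => by exact_mod_cast card_hingePart_le S i) (fun i => by positivity)
    (fun i => by exact_mod_cast card_apexPart_le S i)
    (by rw [hcard] at hS; exact_mod_cast hS)
  simp only [roofTerm, Finset.sum_sub_distrib, ← Finset.mul_sum] at hmain
  zify at hE hcard
  rw [← hcard] at hmain
  omega
end

section
/- For every integer k ≥ 6, let C_k be the graph obtained from the ring of k roofs R_k by adding all k hinge non-edges as edges (so C_k is a ring of k copies of K₅ in which consecutive copies share an edge). Then rk₃(C_k) = rk₃(R_k) = 8k; that is, adding all hinge non-edges does not change the generic 3-dimensional rank. -/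
/-!
The common value `8 k` is an upper bound for the rank of the ring of `K₅`s at every framework and
a lower bound for the rank of the ring of roofs at one explicit framework.

*Upper bound.* Five points of `ℝ³` have an affine dependence `l`, and `l x * l y` is then a stress
of the complete graph on them (`stress_of_affine_dependence`). If both hinges of a body have
distinct end points, this stress is nonzero on some roof edge, so the row of that edge lies in the
span of the other nine rows of its `K₅` (`exists_redundant_edges`). A roof edge belongs to only
one body, hence one edge per body may be dropped and at most `9 k - k` rows remain. Frameworks
with degenerate hinges reduce to this case because linear independence of rows is an open
condition (`exists_perturbation`).

*Lower bound.* Let the apex of a roof be `∑ wⱼ Pⱼ` with `∑ wⱼ = 1`, where the `Pⱼ` are the four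
hinge points of the roof. In a stress the four apex edges carry `s wⱼ` (`apex_stress`), which acts
on the hinge points like stresses `s wᵢ wⱼ` on all six pairs. So a stress of the ring of roofs
becomes a stress of a ring of tetrahedra sharing opposite edges. In such a ring the wrench passed
through the bodies is constant and does no work on any hinge rotation; when the hinge lines span
the six-dimensional space of lines, which is where `k ≥ 6` enters, it vanishes and the stress is
zero (`tetrahedra_ring_stress`). For the weights `1, 1, 1, -2` the vanishing of the hinge stresses
reads `sᵢ₊₁ = 2 sᵢ`, which around a cycle forces `s = 0` (`geometric_ring_zero`).
-/

open SimpleGraph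

variable {V : Type*}

/-- The `k` hinge non-edges `{aᵢ,bᵢ} = {(i,0),(i,1)}` of the ring of roofs. -/
def hingeEdges (k : ℕ) : SimpleGraph (ZMod k × Fin 3) :=
  SimpleGraph.fromRel (fun x y => x.1 = y.1 ∧ x.2 ≠ 2 ∧ y.2 ≠ 2)

/-- The ring of `k` copies of `K₅` obtained from the ring of `k` roofs by adding all
`k` hinge non-edges as edges. -/
def ringOfK5 (k : ℕ) : SimpleGraph (ZMod k × Fin 3) :=
  ringOfRoofs k ⊔ hingeEdges k

open scoped Matrix

/-! ### Rigidity rows of the bodies -/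

lemma rigidityRow_eq [DecidableEq V] (p : V → Fin 3 → ℝ) (u v x : V) (t : Fin 3) :
    rigidityRow p u v x t =
      (if x = u then p u t - p v t else 0) + (if x = v then p v t - p u t else 0) := by
  unfold rigidityRow
  by_cases h1 : x = u
  · subst h1
    by_cases h2 : x = v
    · subst h2; simp
    · simp [h2]
  · simp [h1, ite_apply]

lemma rigidityRow_self [DecidableEq V] (p : V → Fin 3 → ℝ) (u : V) : rigidityRow p u u = 0 := by
  ext x t; simp [rigidityRow_eq]

lemma rigidityRow_comm_s4 [DecidableEq V] (p : V → Fin 3 → ℝ) (u v : V) :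
    rigidityRow p u v = rigidityRow p v u := by
  ext x t; rw [rigidityRow_eq, rigidityRow_eq, add_comm]

/-- The five vertices of the `j`-th body: the hinges `j` and `j + 1` and the apex between them. -/
def bodyVertex {k : ℕ} (j : ZMod k) : Fin 5 → ZMod k × Fin 3 :=
  ![(j, 0), (j, 1), (j + 1, 0), (j + 1, 1), (j + 1, 2)]

/-- End points, as positions in `bodyVertex`, of the nine edges assigned to a body: its eight roof
edges, then its second hinge. The first hinge is assigned to the preceding body. -/
def edgeEnds : Fin 9 → Fin 5 × Fin 5 :=
  ![(0, 2), (0, 3), (1, 2), (1, 3), (4, 0), (4, 1), (4, 2), (4, 3), (2, 3)]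

/-- The rigidity row of the `m`-th edge of the `j`-th body. -/
def bodyRow {k : ℕ} (p : ZMod k × Fin 3 → Fin 3 → ℝ) (j : ZMod k) (m : Fin 9) :
    ZMod k × Fin 3 → Fin 3 → ℝ :=
  rigidityRow p (bodyVertex j (edgeEnds m).1) (bodyVertex j (edgeEnds m).2)

/-! ### Stresses of a roof and of a ring of tetrahedra -/

/-- Six times the signed volume of a tetrahedron. -/
def vol (a b x y : Fin 3 → ℝ) : ℝ := (a - y) ⬝ᵥ ((b - y) ⨯₃ (x - y))

/-- The virtual work of the wrench with force `F` and moment `M` on the rotation about the line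
through `P` and `Q`. -/
def wrenchWork (F M P Q : Fin 3 → ℝ) : ℝ := F ⬝ᵥ (P ⨯₃ Q) + M ⬝ᵥ (Q - P)

/-- Equilibrium at the apex `A + B + X - 2 Y` makes the stresses on its edges proportional to the
barycentric weights `1, 1, 1, -2`. -/
lemma apex_stress {A B X Y : Fin 3 → ℝ} (hD : vol A B X Y ≠ 0) {a b x y : ℝ}
    (h : ∀ t, a * ((A + B + X - (2 : ℝ) • Y) t - A t) + b * ((A + B + X - (2 : ℝ) • Y) t - B t) +
      x * ((A + B + X - (2 : ℝ) • Y) t - X t) + y * ((A + B + X - (2 : ℝ) • Y) t - Y t) = 0) :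
    b = a ∧ x = a ∧ y = -2 * a := by
  have h0 := h 0
  have h1 := h 1
  have h2 := h 2
  simp only [vol, Matrix.vec3_dotProduct, cross_apply, Pi.sub_apply, Matrix.cons_val, Pi.add_apply,
    Pi.smul_apply, smul_eq_mul] at h0 h1 h2 hD
  have ea : a - (a + b + x + y) = 0 := by
    refine (mul_eq_zero.1 ?_).resolve_right hD
    linear_combination
      -h0 * ((B 1 - Y 1) * (X 2 - Y 2) - (B 2 - Y 2) * (X 1 - Y 1))
      - h1 * ((B 2 - Y 2) * (X 0 - Y 0) - (B 0 - Y 0) * (X 2 - Y 2))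
      - h2 * ((B 0 - Y 0) * (X 1 - Y 1) - (B 1 - Y 1) * (X 0 - Y 0))
  have eb : b - (a + b + x + y) = 0 := by
    refine (mul_eq_zero.1 ?_).resolve_right hD
    linear_combination
      h0 * ((A 1 - Y 1) * (X 2 - Y 2) - (A 2 - Y 2) * (X 1 - Y 1))
      + h1 * ((A 2 - Y 2) * (X 0 - Y 0) - (A 0 - Y 0) * (X 2 - Y 2))
      + h2 * ((A 0 - Y 0) * (X 1 - Y 1) - (A 1 - Y 1) * (X 0 - Y 0))
  have ex : x - (a + b + x + y) = 0 := by
    refine (mul_eq_zero.1 ?_).resolve_right hD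
    linear_combination
      -h0 * ((A 1 - Y 1) * (B 2 - Y 2) - (A 2 - Y 2) * (B 1 - Y 1))
      - h1 * ((A 2 - Y 2) * (B 0 - Y 0) - (A 0 - Y 0) * (B 2 - Y 2))
      - h2 * ((A 0 - Y 0) * (B 1 - Y 1) - (A 1 - Y 1) * (B 0 - Y 0))
  refine ⟨by linarith, by linarith, by linarith⟩

lemma cyclic_induction {k : ℕ} [NeZero k] {P : ZMod k → Prop} (h0 : P 0)
    (hs : ∀ i, P i → P (i + 1)) (i : ZMod k) : P i := by
  have : ∀ n : ℕ, P (n : ZMod k) := by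
    intro n
    induction n with
    | zero => simpa using h0
    | succ n ih => simpa using hs _ ih
  simpa using this i.val

lemma geometric_ring_zero {k : ℕ} [NeZero k] {s : ZMod k → ℝ} (h : ∀ i, s (i + 1) = 2 * s i)
    (i : ZMod k) : s i = 0 := by
  have hn : ∀ n : ℕ, s (n : ZMod k) = 2 ^ n * s 0 := by
    intro n
    induction n with
    | zero => simp
    | succ n ih => push_cast; rw [h, ih]; ring
  have hk := hn k
  rw [ZMod.natCast_self] at hk
  have h1 : (1 : ℝ) < 2 ^ k := one_lt_pow₀ (by norm_num) (NeZero.ne k)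
  have h0 : s 0 = 0 := by
    have : (2 ^ k - 1) * s 0 = 0 := by linarith
    exact (mul_eq_zero.1 this).resolve_left (by linarith)
  exact cyclic_induction (P := fun i => s i = 0) h0 (fun i hi => by rw [h, hi, mul_zero]) i

/-- A cyclic chain of tetrahedra hinged along opposite edges carries no nonzero stress when the
hinge lines span the space of lines: the wrench passed through the chain is the same at every
hinge and does no work on any hinge rotation, so it vanishes. Here `q..` are the stresses on the
edges joining consecutive hinges, and `η i` is the stress on hinge `i + 1`. -/
lemma tetrahedra_ring_stress {k : ℕ} [NeZero k] {A B : ZMod k → Fin 3 → ℝ}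
    (hD : ∀ i, vol (A i) (B i) (A (i + 1)) (B (i + 1)) ≠ 0)
    (hspan : ∀ F M : Fin 3 → ℝ, (∀ i, wrenchWork F M (A i) (B i) = 0) → F = 0 ∧ M = 0)
    {q00 q01 q10 q11 η : ZMod k → ℝ}
    (hA : ∀ i t, q00 i * (A (i + 1) t - A i t) + q10 i * (A (i + 1) t - B i t) +
      q00 (i + 1) * (A (i + 1) t - A (i + 1 + 1) t) +
      q01 (i + 1) * (A (i + 1) t - B (i + 1 + 1) t) + η i * (A (i + 1) t - B (i + 1) t) = 0)
    (hB : ∀ i t, q01 i * (B (i + 1) t - A i t) + q11 i * (B (i + 1) t - B i t) +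
      q10 (i + 1) * (B (i + 1) t - A (i + 1 + 1) t) +
      q11 (i + 1) * (B (i + 1) t - B (i + 1 + 1) t) + η i * (B (i + 1) t - A (i + 1) t) = 0)
    (i : ZMod k) : q00 i = 0 ∧ q01 i = 0 ∧ q10 i = 0 ∧ q11 i = 0 ∧ η i = 0 := by
  set F : ZMod k → Fin 3 → ℝ := fun i =>
    q00 i • (A (i + 1) - A i) + q10 i • (A (i + 1) - B i) +
    q01 i • (B (i + 1) - A i) + q11 i • (B (i + 1) - B i) with hF
  set M : ZMod k → Fin 3 → ℝ := fun i =>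
    q00 i • (A i ⨯₃ A (i + 1)) + q10 i • (B i ⨯₃ A (i + 1)) +
    q01 i • (A i ⨯₃ B (i + 1)) + q11 i • (B i ⨯₃ B (i + 1)) with hM
  have hFs : ∀ i, F (i + 1) = F i := by
    intro i
    ext t
    simp only [hF, Pi.add_apply, Pi.smul_apply, Pi.sub_apply, smul_eq_mul]
    linear_combination -hA i t - hB i t
  have hMs : ∀ i, M (i + 1) = M i := by
    intro i
    have a0 := hA i 0
    have a1 := hA i 1
    have a2 := hA i 2
    have b0 := hB i 0
    have b1 := hB i 1
    have b2 := hB i 2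
    ext t
    fin_cases t <;> simp only [hM, Pi.add_apply, Pi.smul_apply, smul_eq_mul, cross_apply,
      Fin.zero_eta, Fin.mk_one, Fin.reduceFinMk, Matrix.cons_val]
    · linear_combination -A (i + 1) 1 * a2 + A (i + 1) 2 * a1 - B (i + 1) 1 * b2 + B (i + 1) 2 * b1
    · linear_combination -A (i + 1) 2 * a0 + A (i + 1) 0 * a2 - B (i + 1) 2 * b0 + B (i + 1) 0 * b2
    · linear_combination -A (i + 1) 0 * a1 + A (i + 1) 1 * a0 - B (i + 1) 0 * b1 + B (i + 1) 1 * b0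
  have hF0 : ∀ i, F i = F 0 := cyclic_induction rfl fun i hi => by rw [hFs, hi]
  have hM0 : ∀ i, M i = M 0 := cyclic_induction rfl fun i hi => by rw [hMs, hi]
  have hz := hspan (F 0) (M 0) fun i => by
    rw [← hF0 i, ← hM0 i]
    simp only [wrenchWork, hF, hM, Matrix.vec3_dotProduct, cross_apply, Pi.sub_apply,
      Pi.add_apply, Pi.smul_apply, smul_eq_mul, Matrix.cons_val]
    ring
  -- The work on an edge line of the tetrahedron isolates the stress on the opposite edge.
  have work (i : ZMod k) (P Q : Fin 3 → ℝ) : wrenchWork (F i) (M i) P Q = 0 := by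
    rw [hF0, hM0, hz.1, hz.2]; simp [wrenchWork]
  have hq (i : ZMod k) : q00 i = 0 ∧ q01 i = 0 ∧ q10 i = 0 ∧ q11 i = 0 := by
    have w00 := work i (B i) (B (i + 1))
    have w01 := work i (B i) (A (i + 1))
    have w10 := work i (A i) (B (i + 1))
    have w11 := work i (A i) (A (i + 1))
    have hDi := hD i
    simp only [vol, wrenchWork, hF, hM, Matrix.vec3_dotProduct, cross_apply, Pi.sub_apply,
      Pi.add_apply, Pi.smul_apply, smul_eq_mul, Matrix.cons_val] at w00 w01 w10 w11 hDi
    refine ⟨(mul_eq_zero.1 ?_).resolve_right hDi, (mul_eq_zero.1 ?_).resolve_right hDi,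
      (mul_eq_zero.1 ?_).resolve_right hDi, (mul_eq_zero.1 ?_).resolve_right hDi⟩
    · linear_combination w00
    · linear_combination -w01
    · linear_combination -w10
    · linear_combination w11
  obtain ⟨z00, z01, z10, z11⟩ := hq i
  obtain ⟨y00, y01, y10, y11⟩ := hq (i + 1)
  refine ⟨z00, z01, z10, z11, ?_⟩
  by_contra hη
  -- A vanishing hinge vector would make the tetrahedron degenerate.
  have hAB : A (i + 1) = B (i + 1) := by
    ext t
    have := hA i t
    rw [z00, z10, y00, y01] at this
    have h' : η i * (A (i + 1) t - B (i + 1) t) = 0 := by linarith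
    linarith [(mul_eq_zero.1 h').resolve_left hη]
  refine hD i ?_
  simp [vol, hAB]

/-! ### A framework in which the roof rows are independent -/

/-- Positions of the points `aᵢ` on six lines whose Plücker vectors span `ℝ⁶`. -/
def lineA : Fin 6 → Fin 3 → ℤ :=
  ![![-1, 0, 0], ![-1, 1, 0], ![2, 0, 0], ![1, 0, 0], ![0, -1, 0], ![0, 0, 0]]

/-- Positions of the points `bᵢ` on the six lines. -/
def lineB : Fin 6 → Fin 3 → ℤ :=
  ![![-1, 2, 1], ![0, 2, 1], ![0, 1, 1], ![0, -1, 1], ![-1, 0, 1], ![0, 0, 1]]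

/-- The line carrying hinge `i`: the first six hinges use all six lines, the later ones
alternate between the last two, so that consecutive hinges use different lines. -/
def lineIndex {k : ℕ} (i : ZMod k) : Fin 6 :=
  if h : i.val < 6 then ⟨i.val, h⟩ else if i.val % 2 = 0 then 4 else 5

/-- The point `aᵢ` of the chosen framework. -/
def ptA {k : ℕ} (i : ZMod k) : Fin 3 → ℝ := fun t => lineA (lineIndex i) t

/-- The point `bᵢ` of the chosen framework. -/
def ptB {k : ℕ} (i : ZMod k) : Fin 3 → ℝ := fun t => lineB (lineIndex i) t

/-- The chosen framework. The coefficients `1, 1, 1, -2` of the apex are such that its roof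
imposes a stress `s` on one hinge and `-2 s` on the other. -/
def ringFramework {k : ℕ} (v : ZMod k × Fin 3) : Fin 3 → ℝ :=
  ![ptA v.1, ptB v.1, ptA (v.1 - 1) + ptB (v.1 - 1) + ptA v.1 - (2 : ℝ) • ptB v.1] v.2

lemma lineIndex_succ_ne {k : ℕ} (hk : 6 ≤ k) (i : ZMod k) : lineIndex i ≠ lineIndex (i + 1) := by
  have : NeZero k := ⟨by omega⟩
  have : Fact (1 < k) := ⟨by omega⟩
  have hlt := ZMod.val_lt i
  have hv : (i + 1).val = (i.val + 1) % k := by rw [ZMod.val_add, ZMod.val_one]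
  have hv' : (i + 1).val = i.val + 1 ∨ (i + 1).val = 0 ∧ 5 ≤ i.val := by
    rcases Nat.lt_or_ge (i.val + 1) k with h | h
    · left; rw [hv, Nat.mod_eq_of_lt h]
    · have hik : i.val + 1 = k := by omega
      exact Or.inr ⟨by rw [hv, hik, Nat.mod_self], by omega⟩
  unfold lineIndex
  rcases hv' with h | ⟨h, h5⟩ <;> rw [h] <;> split_ifs <;> simp [Fin.ext_iff, -ZMod.val_eq_zero] <;>
    omega

/-- The six lines are pairwise skew. Since `a` and `b` lie at heights `0` and `1`, the volume of
the tetrahedron spanned by two of them is a planar determinant. -/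
lemma vol_lines : ∀ c d : Fin 6, c ≠ d →
    (lineA c 0 - lineA d 0) * (lineB c 1 - lineB d 1) -
      (lineA c 1 - lineA d 1) * (lineB c 0 - lineB d 0) ≠ 0 := by
  decide

lemma lineA_two (c : Fin 6) : lineA c 2 = 0 := by revert c; decide

lemma lineB_two (c : Fin 6) : lineB c 2 = 1 := by revert c; decide

lemma vol_ring {k : ℕ} (hk : 6 ≤ k) (i : ZMod k) :
    vol (ptA i) (ptB i) (ptA (i + 1)) (ptB (i + 1)) ≠ 0 := by
  have h := vol_lines _ _ (lineIndex_succ_ne hk i)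
  have h' := (Int.cast_ne_zero (α := ℝ)).2 h
  push_cast at h'
  intro h0
  apply h'
  simp only [vol, ptA, ptB, Matrix.vec3_dotProduct, cross_apply, Pi.sub_apply, Matrix.cons_val,
    lineA_two, lineB_two, Int.cast_zero, Int.cast_one] at h0
  linear_combination -h0

lemma ring_lines_span {k : ℕ} (hk : 6 ≤ k) (F M : Fin 3 → ℝ)
    (h : ∀ i : ZMod k, wrenchWork F M (ptA i) (ptB i) = 0) : F = 0 ∧ M = 0 := by
  have key : ∀ c : Fin 6, wrenchWork F M (fun t => lineA c t) (fun t => lineB c t) = 0 := by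
    intro c
    have hc : lineIndex ((c.val : ℕ) : ZMod k) = c := by
      have : ((c.val : ℕ) : ZMod k).val = c.val :=
        ZMod.val_cast_of_lt (by have := c.isLt; omega)
      simp [lineIndex, this]
    have := h ((c.val : ℕ) : ZMod k)
    unfold ptA ptB at this
    rwa [hc] at this
  have k0 := key 0
  have k1 := key 1
  have k2 := key 2
  have k3 := key 3
  have k4 := key 4
  have k5 := key 5
  simp only [wrenchWork, Matrix.vec3_dotProduct, cross_apply, lineA, lineB, Pi.sub_apply,
    Matrix.cons_val, Int.cast_zero, Int.cast_one, Int.cast_neg, Int.cast_ofNat] at k0 k1 k2 k3 k4 k5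
  constructor <;> ext t <;> fin_cases t <;> simp <;> linarith

lemma roof_rows_independent {k : ℕ} (hk : 6 ≤ k) :
    haveI : NeZero k := ⟨Nat.ne_zero_of_lt hk⟩
    LinearIndependent ℝ (fun x : ZMod k × Fin 8 => bodyRow ringFramework x.1 x.2.castSucc) := by
  have : NeZero k := ⟨by omega⟩
  rw [Fintype.linearIndependent_iff]
  intro g hg
  have eqn (i : ZMod k) (s t : Fin 3) := congrFun (congrFun hg (i + 1, s)) t
  simp only [Fintype.sum_prod_type, Fin.sum_univ_eight, bodyRow, Finset.sum_apply,
    Pi.smul_apply, rigidityRow_eq, smul_eq_mul] at eqn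
  have eqA (i : ZMod k) (t : Fin 3) := eqn i 0 t
  have eqB (i : ZMod k) (t : Fin 3) := eqn i 1 t
  have eqC (i : ZMod k) (t : Fin 3) := eqn i 2 t
  clear eqn
  simp [edgeEnds, bodyVertex, Finset.sum_add_distrib, mul_add, ringFramework] at eqA eqB eqC
  have hs (i : ZMod k) := apex_stress (vol_ring hk i) (a := g (i, 4)) (b := g (i, 5))
    (x := g (i, 6)) (y := g (i, 7)) (by simpa using eqC i)
  -- Eliminating the apex `∑ wⱼ Pⱼ` turns its edges, of stresses `s wⱼ`, into stresses `s wᵢ wⱼ`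
  -- on all pairs of hinge points.
  have hz := tetrahedra_ring_stress (vol_ring hk) (ring_lines_span hk)
    (q00 := fun i => g (i, 0) + g (i, 4)) (q01 := fun i => g (i, 1) - 2 * g (i, 4))
    (q10 := fun i => g (i, 2) + g (i, 4)) (q11 := fun i => g (i, 3) - 2 * g (i, 4))
    (η := fun i => g (i + 1, 4) - 2 * g (i, 4))
    (by
      intro i t
      have h := eqA i t
      rw [(hs i).2.1] at h
      linear_combination h)
    (by
      intro i t
      have h := eqB i t
      rw [(hs i).2.2, (hs (i + 1)).1] at h
      linear_combination h)
  have h4 := geometric_ring_zero (s := fun i => g (i, 4)) fun i => by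
    linarith [(hz i).2.2.2.2]
  rintro ⟨i, m⟩
  obtain ⟨z0, z1, z2, z3, -⟩ := hz i
  obtain ⟨h5, h6, h7⟩ := hs i
  have h4i := h4 i
  simp only [h4i, mul_zero, add_zero, sub_zero] at z0 z1 z2 z3 h5 h6 h7
  fin_cases m <;> assumption

/-! ### Edges of the two rings -/

lemma bodyVertex_injective {k : ℕ} (hk : 6 ≤ k) (j : ZMod k) :
    Function.Injective (bodyVertex j) := by
  have : Fact (1 < k) := ⟨by omega⟩
  intro x y h
  fin_cases x <;> fin_cases y <;> simp_all [bodyVertex]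

lemma bodyRow_mem_roof {k : ℕ} (hk : 6 ≤ k) (p : ZMod k × Fin 3 → Fin 3 → ℝ) (j : ZMod k)
    (m : Fin 8) : ∃ u v, (ringOfRoofs k).Adj u v ∧ bodyRow p j m.castSucc = rigidityRow p u v := by
  refine ⟨_, _, ?_, rfl⟩
  have hne : (edgeEnds m.castSucc).1 ≠ (edgeEnds m.castSucc).2 := by revert m; decide
  rw [ringOfRoofs, fromRel_adj]
  refine ⟨fun h => hne (bodyVertex_injective hk j h), ?_⟩
  fin_cases m <;> simp [bodyVertex, edgeEnds]

lemma ringOfK5_row {k : ℕ} (p : ZMod k × Fin 3 → Fin 3 → ℝ) {u v : ZMod k × Fin 3}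
    (h : (ringOfK5 k).Adj u v) : ∃ j m, rigidityRow p u v = bodyRow p j m := by
  have key : ∀ (x y : ZMod k × Fin 3), ((y.1 = x.1 + 1 ∧ x.2 ≠ 2 ∧ y.2 ≠ 2) ∨
      (x.2 = 2 ∧ y.2 ≠ 2 ∧ (y.1 = x.1 ∨ y.1 + 1 = x.1)) ∨
      (x ≠ y ∧ x.1 = y.1 ∧ x.2 ≠ 2 ∧ y.2 ≠ 2)) → ∃ j m, rigidityRow p x y = bodyRow p j m := by
    rintro ⟨i, a⟩ ⟨j, b⟩ h
    simp only at h
    rcases h with ⟨rfl, ha, hb⟩ | ⟨rfl, hb, rfl | rfl⟩ | ⟨hne, rfl, ha, hb⟩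
    · fin_cases a <;> fin_cases b <;> simp at ha hb
      · exact ⟨i, 0, rfl⟩
      · exact ⟨i, 1, rfl⟩
      · exact ⟨i, 2, rfl⟩
      · exact ⟨i, 3, rfl⟩
    · obtain ⟨i, rfl⟩ : ∃ i, j = i + 1 := ⟨j - 1, by ring⟩
      fin_cases b <;> simp at hb
      · exact ⟨i, 6, rfl⟩
      · exact ⟨i, 7, rfl⟩
    · fin_cases b <;> simp at hb
      · exact ⟨j, 4, rfl⟩
      · exact ⟨j, 5, rfl⟩
    · obtain ⟨j, rfl⟩ : ∃ j, i = j + 1 := ⟨i - 1, by ring⟩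
      fin_cases a <;> fin_cases b <;> simp at ha hb hne
      · exact ⟨j, 8, rfl⟩
      · exact ⟨j, 8, rigidityRow_comm_s4 _ _ _⟩
  rw [ringOfK5, sup_adj, ringOfRoofs, hingeEdges, fromRel_adj, fromRel_adj] at h
  rcases h with ⟨hne, h | h⟩ | ⟨hne, h | h⟩
  · exact key u v (by tauto)
  · rw [rigidityRow_comm_s4]; exact key v u (by tauto)
  · exact key u v (by tauto)
  · rw [rigidityRow_comm_s4]; exact key v u (Or.inr (Or.inr ⟨hne.symm, h⟩))

/-! ### Redundant edges in the ring of `K₅`s -/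

/-- Five points of `ℝ³` satisfy an affine dependence. -/
lemma exists_affine_dependence (P : Fin 5 → Fin 3 → ℝ) :
    ∃ l : Fin 5 → ℝ, l ≠ 0 ∧ ∑ x, l x = 0 ∧ ∑ x, l x • P x = 0 := by
  have h := LinearMap.ker_ne_bot_of_finrank_lt (K := ℝ)
    (f := Fintype.linearCombination ℝ (fun x => ((1 : ℝ), P x))) (by simp)
  obtain ⟨l, hl, hl0⟩ := Submodule.exists_mem_ne_zero_of_ne_bot h
  rw [LinearMap.mem_ker, Fintype.linearCombination_apply] at hl
  refine ⟨l, hl0, ?_, ?_⟩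
  · simpa [Prod.fst_sum] using congrArg Prod.fst hl
  · simpa [Prod.snd_sum] using congrArg Prod.snd hl

/-- An affine dependence `l` of the points yields the stress `l x * l y`. -/
lemma stress_of_affine_dependence [DecidableEq V] (p : V → Fin 3 → ℝ) (f : Fin 5 → V)
    {l : Fin 5 → ℝ} (h0 : ∑ x, l x = 0) (h1 : ∑ x, l x • p (f x) = 0) :
    ∑ x, ∑ y, (l x * l y) • rigidityRow p (f x) (f y) = 0 := by
  ext v t
  have h1t : ∑ x, l x * p (f x) t = 0 := by simpa using congrFun h1 t
  have inner (x : Fin 5) : ∑ y, l y * (p (f x) t - p (f y) t) = 0 := by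
    simp only [mul_sub, Finset.sum_sub_distrib, ← Finset.sum_mul, h0, h1t]; simp
  have half : ∑ x, ∑ y, (l x * l y) * (if v = f x then p (f x) t - p (f y) t else 0) = 0 := by
    refine Finset.sum_eq_zero fun x _ => ?_
    split_ifs
    · simp only [mul_assoc, ← Finset.mul_sum, inner, mul_zero]
    · simp
  have half' : ∑ x, ∑ y, (l x * l y) * (if v = f y then p (f y) t - p (f x) t else 0) = 0 := by
    rw [Finset.sum_comm]
    refine Eq.trans ?_ half
    simp only [mul_comm]
  simp only [Finset.sum_apply, Pi.smul_apply, rigidityRow_eq, smul_eq_mul, mul_add,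
    Finset.sum_add_distrib, half, half', Pi.zero_apply, add_zero]

/-- The affine dependence of the points of a body involves both ends of some roof edge: its support
could otherwise only be one of the two hinges, whose end points are distinct. -/
lemma exists_roof_edge_in_stress {k : ℕ} {p : ZMod k × Fin 3 → Fin 3 → ℝ}
    (hp : ∀ i, p (i, 0) ≠ p (i, 1)) (j : ZMod k) {l : Fin 5 → ℝ} (hl : l ≠ 0)
    (h0 : ∑ x, l x = 0) (h1 : ∑ x, l x • p (bodyVertex j x) = 0) :
    ∃ m : Fin 8, l (edgeEnds m.castSucc).1 * l (edgeEnds m.castSucc).2 ≠ 0 := by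
  by_contra! h
  have e0 := h 0
  have e1 := h 1
  have e2 := h 2
  have e3 := h 3
  have e4 := h 4
  have e5 := h 5
  have e6 := h 6
  have e7 := h 7
  simp [edgeEnds] at e0 e1 e2 e3 e4 e5 e6 e7
  simp [Fin.sum_univ_five] at h0
  simp only [Fin.sum_univ_five, bodyVertex, Matrix.cons_val] at h1
  have h4 : l 4 = 0 := by
    by_contra h4
    simp_all
  have pair {a : ℝ} {P Q : Fin 3 → ℝ} (hPQ : P ≠ Q) (h : a • P + (-a) • Q = 0) : a = 0 := by
    have : a • (P - Q) = 0 := by rw [← h]; module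
    exact (smul_eq_zero.1 this).resolve_right (sub_ne_zero.2 hPQ)
  by_cases h01 : l 0 = 0 ∧ l 1 = 0
  · have h3 : l 3 = -l 2 := by linarith [h01.1, h01.2]
    have h2 : l 2 = 0 := pair (hp (j + 1)) (by simpa [h01, h4, h3] using h1)
    refine hl (funext fun x => ?_)
    fin_cases x <;> simp [h01, h2, h3, h4]
  · have h23 : l 2 = 0 ∧ l 3 = 0 := by tauto
    have h3 : l 1 = -l 0 := by linarith [h23.1, h23.2]
    have h2 : l 0 = 0 := pair (hp j) (by simpa [h23, h4, h3] using h1)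
    exact h01 ⟨h2, by simp [h3, h2]⟩

/-- The edges assigned to a body exhaust its pairs of vertices, except for the first hinge. -/
lemma edgeEnds_cover : ∀ x y : Fin 5, x = y ∨ (∃ m, edgeEnds m = (x, y)) ∨
    (∃ m, edgeEnds m = (y, x)) ∨ (x, y) = (0, 1) ∨ (x, y) = (1, 0) := by
  decide

/-- When every hinge has distinct end points, one roof edge can be dropped from each body without
changing the span of the rows. -/
lemma exists_redundant_edges {k : ℕ} {p : ZMod k × Fin 3 → Fin 3 → ℝ}
    (hp : ∀ i, p (i, 0) ≠ p (i, 1)) :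
    ∃ f : ZMod k → Fin 8, ∀ j, bodyRow p j (f j).castSucc ∈ Submodule.span ℝ
      {w | ∃ i m, m ≠ (f i).castSucc ∧ w = bodyRow p i m} := by
  choose l hl h0 h1 using fun j : ZMod k =>
    exists_affine_dependence (fun x => p (bodyVertex j x))
  choose f hf using fun j => exists_roof_edge_in_stress hp j (hl j) (h0 j) (h1 j)
  refine ⟨f, fun j => ?_⟩
  set W := Submodule.span ℝ {w | ∃ i m, m ≠ (f i).castSucc ∧ w = bodyRow p i m} with hW
  set e := edgeEnds (f j).castSucc with he
  have hne : e.1 ≠ e.2 := by rw [he]; generalize f j = m; revert m; decide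
  have mem (i : ZMod k) (m : Fin 9) (hm : m ≠ (f i).castSucc) : bodyRow p i m ∈ W :=
    Submodule.subset_span ⟨i, m, hm, rfl⟩
  have hinge : rigidityRow p (bodyVertex j 0) (bodyVertex j 1) ∈ W := by
    have := mem (j - 1) 8 (Fin.castSucc_lt_last _).ne'
    simpa [bodyRow, edgeEnds, bodyVertex] using this
  have others (x y : Fin 5) (h : (x, y) ≠ e) (h' : (y, x) ≠ e) :
      rigidityRow p (bodyVertex j x) (bodyVertex j y) ∈ W := by
    rcases edgeEnds_cover x y with rfl | ⟨m, hm⟩ | ⟨m, hm⟩ | hm | hm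
    · rw [rigidityRow_self]; exact W.zero_mem
    · have := mem j m (by rintro rfl; exact h hm.symm)
      rwa [bodyRow, hm] at this
    · have := mem j m (by rintro rfl; exact h' hm.symm)
      rw [bodyRow, hm] at this
      rwa [rigidityRow_comm_s4]
    · obtain ⟨rfl, rfl⟩ := Prod.mk.inj hm
      exact hinge
    · obtain ⟨rfl, rfl⟩ := Prod.mk.inj hm
      rwa [rigidityRow_comm_s4]
  have hs := stress_of_affine_dependence p (bodyVertex j) (h0 j) (h1 j)
  rw [← Fintype.sum_prod_type' (f := fun x y => (l j x * l j y) •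
    rigidityRow p (bodyVertex j x) (bodyVertex j y)),
    ← Finset.add_sum_erase _ _ (Finset.mem_univ e),
    ← Finset.add_sum_erase _ _ (a := e.swap) (by simp [Prod.ext_iff, hne, hne.symm])] at hs
  set R := ∑ x ∈ (Finset.univ.erase e).erase e.swap, (l j x.1 * l j x.2) •
    rigidityRow p (bodyVertex j x.1) (bodyVertex j x.2) with hR
  have hRW : R ∈ W := by
    refine Submodule.sum_mem _ fun x hx => W.smul_mem _ (others x.1 x.2 ?_ ?_)
    · simp only [Finset.mem_erase] at hx; exact hx.2.1
    · simp only [Finset.mem_erase] at hx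
      intro h
      exact hx.1 (by rw [← h]; rfl)
  have h2 : (2 * (l j e.1 * l j e.2)) • bodyRow p j (f j).castSucc = -R := by
    rw [Prod.fst_swap, Prod.snd_swap, rigidityRow_comm_s4 p (bodyVertex j e.2)] at hs
    rw [bodyRow, ← he, ← sub_eq_zero, ← hs]
    module
  have h3 := W.neg_mem hRW
  rw [← h2] at h3
  exact (W.smul_mem_iff (mul_ne_zero two_ne_zero (hf j))).1 h3

lemma rankAt_ringOfK5_le {k : ℕ} [NeZero k] {p : ZMod k × Fin 3 → Fin 3 → ℝ}
    (hp : ∀ i, p (i, 0) ≠ p (i, 1)) : rankAt (ringOfK5 k) p ≤ 8 * k := by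
  obtain ⟨f, hf⟩ := exists_redundant_edges hp
  have hle : Submodule.span ℝ {w | ∃ i j, (ringOfK5 k).Adj i j ∧ w = rigidityRow p i j} ≤
      Submodule.span ℝ (Set.range fun x : ZMod k × Fin 8 =>
        bodyRow p x.1 ((f x.1).castSucc.succAbove x.2)) := by
    have hle' : Submodule.span ℝ {w | ∃ i m, m ≠ (f i).castSucc ∧ w = bodyRow p i m} ≤
        Submodule.span ℝ (Set.range fun x : ZMod k × Fin 8 =>
          bodyRow p x.1 ((f x.1).castSucc.succAbove x.2)) := by
      refine Submodule.span_mono ?_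
      rintro _ ⟨i, m, hm, rfl⟩
      obtain ⟨n, rfl⟩ := Fin.exists_succAbove_eq hm
      exact ⟨(i, n), rfl⟩
    refine le_trans (Submodule.span_le.2 ?_) hle'
    rintro _ ⟨u, v, h, rfl⟩
    obtain ⟨j, m, hjm⟩ := ringOfK5_row p h
    rw [hjm]
    by_cases hm : m = (f j).castSucc
    · rw [hm]; exact hf j
    · exact Submodule.subset_span ⟨j, m, hm, rfl⟩
  calc rankAt (ringOfK5 k) p ≤ _ := Submodule.finrank_mono hle
    _ ≤ Fintype.card (ZMod k × Fin 8) := finrank_range_le_card _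
    _ = 8 * k := by simp [ZMod.card, mul_comm]

/-! ### Perturbation and conclusion -/

/-- Every framework has rank at most that of some framework all of whose hinges have distinct end
points: linear independence of the rows survives small perturbations. -/
lemma exists_perturbation {k : ℕ} [NeZero k] (G : SimpleGraph (ZMod k × Fin 3))
    (p : ZMod k × Fin 3 → Fin 3 → ℝ) :
    ∃ p' : ZMod k × Fin 3 → Fin 3 → ℝ, (∀ i, p' (i, 0) ≠ p' (i, 1)) ∧
      rankAt G p ≤ rankAt G p' := by
  obtain ⟨f, hf, -, hli⟩ := Submodule.exists_fun_fin_finrank_span_eq ℝ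
    {w : ZMod k × Fin 3 → Fin 3 → ℝ | ∃ i j, G.Adj i j ∧ w = rigidityRow p i j}
  choose a b hab hfab using hf
  let q : ℝ → ZMod k × Fin 3 → Fin 3 → ℝ :=
    fun s v t => p v t + if v.2 = 0 then s else 0
  have hq0 : q 0 = p := by ext v t; simp [q]
  have hcont : Continuous fun s n => rigidityRow (q s) (a n) (b n) := by
    refine continuous_pi fun n => continuous_pi fun v => continuous_pi fun t => ?_
    simp only [rigidityRow_eq, q]
    split_ifs <;> fun_prop
  have hopen := (isOpen_setOfPred_linearIndependent (𝕜 := ℝ)).preimage hcont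
  have hfin : (Set.range fun i : ZMod k => p (i, 1) 0 - p (i, 0) 0).Finite := Set.finite_range _
  obtain ⟨s, hs, hsli⟩ := hfin.countable.dense_compl ℝ |>.inter_open_nonempty _ hopen
    ⟨0, by
      change LinearIndependent ℝ fun n => rigidityRow (q 0) (a n) (b n)
      rw [hq0]
      exact (funext hfab : f = fun n => rigidityRow p (a n) (b n)) ▸ hli⟩
  refine ⟨q s, fun i h => hsli ⟨i, ?_⟩, ?_⟩
  · have := congrFun h 0
    simp [q] at this
    simp only
    linarith
  · have hs' : LinearIndependent ℝ fun n => rigidityRow (q s) (a n) (b n) := hs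
    have hcard := finrank_span_eq_card hs'
    rw [Fintype.card_fin] at hcard
    refine (Eq.ge hcard).trans (Submodule.finrank_mono (Submodule.span_mono ?_))
    rintro _ ⟨n, rfl⟩
    exact ⟨_, _, hab n, rfl⟩

theorem rank_unchanged_by_adding_hinges (k : ℕ) (hk : 6 ≤ k) :
    genRank (ringOfK5 k) = genRank (ringOfRoofs k) ∧
    genRank (ringOfRoofs k) = 8 * k := by
  have : NeZero k := ⟨by omega⟩
  have hupper (p) : rankAt (ringOfK5 k) p ≤ 8 * k := by
    obtain ⟨p', hp', hle⟩ := exists_perturbation (ringOfK5 k) p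
    exact hle.trans (rankAt_ringOfK5_le hp')
  have hmono (p) : rankAt (ringOfRoofs k) p ≤ rankAt (ringOfK5 k) p := by
    refine Submodule.finrank_mono (Submodule.span_mono ?_)
    rintro _ ⟨i, j, h, rfl⟩
    exact ⟨i, j, Or.inl h, rfl⟩
  have hlower : 8 * k ≤ rankAt (ringOfRoofs k) ringFramework := by
    have hcard := finrank_span_eq_card (roof_rows_independent hk)
    rw [Fintype.card_prod, ZMod.card, Fintype.card_fin, mul_comm] at hcard
    refine (Eq.ge hcard).trans (Submodule.finrank_mono (Submodule.span_mono ?_))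
    rintro _ ⟨⟨j, m⟩, rfl⟩
    exact bodyRow_mem_roof hk _ j m
  have hroof : genRank (ringOfRoofs k) = 8 * k := by
    refine IsGreatest.csSup_eq ⟨⟨ringFramework, ?_⟩, ?_⟩
    · exact le_antisymm hlower ((hmono _).trans (hupper _))
    · rintro _ ⟨p, rfl⟩
      exact (hmono p).trans (hupper p)
  have hK5 : genRank (ringOfK5 k) = 8 * k := by
    refine IsGreatest.csSup_eq ⟨⟨ringFramework, ?_⟩, ?_⟩
    · exact le_antisymm (hlower.trans (hmono _)) (hupper _)
    · rintro _ ⟨p, rfl⟩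
      exact hupper p
  exact ⟨hK5.trans hroof.symm, hroof⟩
end
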